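/- arXiv:1411.1140 — 2 statements merged into one kernel-verified Lean document; each statement's English description precedes it below -/
import Mathlib

section
/- Let K be a field complete with respect to a non-Archimedean norm, let A be a commutative K-algebra which is finitely generated as a K-algebra, and let G be a finite group acting on A by K-algebra automorphisms. Let B be the subalgebra of G-invariant elements of A. Then every multiplicative seminorm y on B extending the norm of K extends to A: there exists a multiplicative seminorm x on A extending the norm of K with x(b) = y(b) for every b ∈ B. -/
/-- The trivial seminorm attached to a prime ideal. -/
noncomputable def trivialSeminormOfPrime {A : Type*} [CommRing A] (q : Ideal A) [hq : q.IsPrime] :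
    MulRingSeminorm A := by
  classical
  exact
  { toFun := fun a => if a ∈ q then 0 else 1
    map_zero' := by simp
    add_le' := fun r s => by
      by_cases hr : r ∈ q <;> by_cases hs : s ∈ q <;> by_cases hrs : r + s ∈ q <;>
        simp [hr, hs, hrs]
      exact absurd (q.add_mem hr hs) hrs
    neg' := fun r => by simp
    map_one' := by simp [(Ideal.ne_top_iff_one q).1 hq.ne_top]
    map_mul' := fun r s => by
      by_cases hr : r ∈ q <;> by_cases hs : s ∈ q <;> simp [hr, hs, hq.mul_mem_iff_mem_or_mem] }

theorem trivialSeminormOfPrime_apply {A : Type*} [CommRing A] (q : Ideal A) [hq : q.IsPrime]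
    (a : A) [Decidable (a ∈ q)] : trivialSeminormOfPrime q a = if a ∈ q then 0 else 1 := by
  by_cases h : a ∈ q
  · rw [if_pos h]
    exact if_pos h
  · rw [if_neg h]
    exact if_neg h

theorem extend_of_hom_nontrivial {B A : Type*} [CommRing B] [CommRing A] [Algebra B A]
    [Algebra.IsIntegral B A] {E : Type*} [NontriviallyNormedField E] [CompleteSpace E]
    [IsUltrametricDist E] (φ : B →+* E) (q : Ideal A) [q.IsPrime]
    (hq : q.comap (algebraMap B A) = RingHom.ker φ) :
    ∃ x : MulRingSeminorm A, ∀ b : B, x (algebraMap B A b) = ‖φ b‖ := by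
  let M := AlgebraicClosure E
  let p := q.comap (algebraMap B A)
  let ψ : B ⧸ p →+* M := (algebraMap E M).comp
    (Ideal.Quotient.lift p φ (fun a ha => by
      have : a ∈ RingHom.ker φ := hq ▸ ha
      simpa using this))
  have hψ : Function.Injective ψ := by
    refine (algebraMap E M).injective.comp ?_
    apply RingHom.lift_injective_of_ker_le_ideal
    exact hq.ge
  let _ : Algebra (B ⧸ p) M := ψ.toAlgebra
  have : FaithfulSMul (B ⧸ p) M := (faithfulSMul_iff_algebraMap_injective _ _).2 hψ
  have : FaithfulSMul (B ⧸ p) (A ⧸ q) :=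
    (faithfulSMul_iff_algebraMap_injective _ _).2 Ideal.algebraMap_quotient_injective
  have : Algebra.IsIntegral (B ⧸ p) (A ⧸ q) := inferInstance
  have : p.IsPrime := Ideal.comap_isPrime _ _
  have : IsDomain (B ⧸ p) := inferInstance
  have : IsDomain (A ⧸ q) := inferInstance
  have : Module.IsTorsionFree (B ⧸ p) (A ⧸ q) :=
    Module.IsTorsionFree.trans_faithfulSMul (B ⧸ p) (A ⧸ q) (A ⧸ q)
  have : Module.IsTorsionFree (B ⧸ p) M :=
    Module.IsTorsionFree.trans_faithfulSMul (B ⧸ p) M M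
  let f : A ⧸ q →ₐ[B ⧸ p] M := IsAlgClosed.lift
  let N := spectralMulAlgNorm E M
  let F : A →+* M := f.toRingHom.comp (Ideal.Quotient.mk q)
  refine ⟨{ toFun := fun a => N (F a)
            map_zero' := by simp
            add_le' := fun r s => by simpa using map_add_le_add N (F r) (F s)
            neg' := fun r => by simp [map_neg F, map_neg_eq_map N]
            map_one' := by simp
            map_mul' := fun r s => by simp }, fun b => ?_⟩
  change N (F (algebraMap B A b)) = _
  have h1 : F (algebraMap B A b) = algebraMap E M (φ b) := by
    have := f.commutes (Ideal.Quotient.mk p b)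
    exact this
  rw [h1]
  exact spectralNorm_extends _

theorem extend_of_hom {B A : Type*} [CommRing B] [CommRing A] [Algebra B A]
    [Algebra.IsIntegral B A] (hinj : Function.Injective (algebraMap B A))
    {E : Type*} [NormedField E] [CompleteSpace E]
    [IsUltrametricDist E] (φ : B →+* E) :
    ∃ x : MulRingSeminorm A, ∀ b : B, x (algebraMap B A b) = ‖φ b‖ := by
  classical
  have hprime : (RingHom.ker φ).IsPrime := RingHom.ker_isPrime φ
  obtain ⟨q, -, hqp, hq⟩ := Ideal.exists_ideal_over_prime_of_isIntegral (S := A)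
    (RingHom.ker φ) ⊥ (by
      intro b hb
      have h0 : algebraMap B A b = 0 := hb
      rw [(map_eq_zero_iff _ hinj).1 h0]
      exact Ideal.zero_mem _)
  by_cases H : ∃ e : E, e ≠ 0 ∧ ‖e‖ ≠ 1
  · letI := NontriviallyNormedField.ofNormNeOne H
    exact extend_of_hom_nontrivial φ q hq
  · push Not at H
    refine ⟨trivialSeminormOfPrime q, fun b => ?_⟩
    rw [trivialSeminormOfPrime_apply]
    have : algebraMap B A b ∈ q ↔ φ b = 0 := by
      rw [← Ideal.mem_comap, hq, RingHom.mem_ker]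
    by_cases hb : φ b = 0
    · simp [this, hb]
    · simp [this, hb, H _ hb]

theorem nonarch_of_natCast {B : Type*} [CommRing B] (y : MulRingSeminorm B)
    (h : ∀ n : ℕ, y n ≤ 1) (a b : B) : y (a + b) ≤ max (y a) (y b) := by
  set c := max (y a) (y b) with hc
  have hc0 : 0 ≤ c := (apply_nonneg y a).trans (le_max_left _ _)
  have key : ∀ m : ℕ, y (a + b) ^ m ≤ (m + 1) * c ^ m := by
    intro m
    rw [← map_pow, add_pow]
    refine (Finset.le_sum_of_subadditive y (map_zero y).le (map_add_le_add y) _ _).trans ?_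
    have : ∀ i ∈ Finset.range (m + 1), y (a ^ i * b ^ (m - i) * (m.choose i : B)) ≤ c ^ m := by
      intro i hi
      have hi' : i + (m - i) = m := by have := Finset.mem_range.1 hi; omega
      rw [map_mul, map_mul, map_pow, map_pow]
      calc y a ^ i * y b ^ (m - i) * y (m.choose i : B)
          ≤ c ^ i * c ^ (m - i) * 1 := by
            have ha := apply_nonneg y a
            have hb := apply_nonneg y b
            gcongr
            · exact le_max_left _ _
            · exact le_max_right _ _
            · exact h _
        _ = c ^ m := by rw [mul_one, ← pow_add, hi']
    refine (Finset.sum_le_sum this).trans ?_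
    simp
  refine le_of_forall_gt_imp_ge_of_dense fun d hd => ?_
  have hd0 : 0 < d := hc0.trans_lt hd
  rcases hc0.eq_or_lt with h0 | h0
  · have := key 1
    rw [← h0] at this
    simp at this
    linarith
  obtain ⟨m, hm⟩ := Real.exists_natCast_add_one_lt_pow_of_one_lt ((one_lt_div h0).2 hd)
  rw [div_pow, lt_div_iff₀ (by positivity)] at hm
  refine le_of_pow_le_pow_left₀ (n := m) (fun h => ?_) hd0.le ((key m).trans hm.le)
  subst h
  simp at hm

theorem exists_complete_field.{u} {B : Type u} [CommRing B] (y : MulRingSeminorm B)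
    (h : ∀ n : ℕ, y n ≤ 1) :
    ∃ (E : Type u) (_ : NormedField E) (_ : CompleteSpace E) (_ : IsUltrametricDist E)
      (φ : B →+* E), ∀ b, ‖φ b‖ = y b := by
  let v : Valuation B NNReal :=
    { toFun := fun b => ⟨y b, apply_nonneg y b⟩
      map_zero' := NNReal.eq (map_zero y)
      map_one' := NNReal.eq (map_one y)
      map_mul' := fun a b => NNReal.eq (map_mul y a b)
      map_add_le_max' := fun a b => by
        have := nonarch_of_natCast y h a b
        rcases le_max_iff.1 this with h1 | h1
        · exact le_max_of_le_left (NNReal.coe_le_coe.1 h1)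
        · exact le_max_of_le_right (NNReal.coe_le_coe.1 h1) }
  let w : Valuation (B ⧸ v.supp) NNReal := v.onQuot le_rfl
  have hw : ∀ b, w (Ideal.Quotient.mk _ b) = v b := fun b => rfl
  have hws : nonZeroDivisors (B ⧸ v.supp) ≤ w.supp.primeCompl := by
    intro r hr hr'
    obtain ⟨b, rfl⟩ := Ideal.Quotient.mk_surjective r
    have h1 : v b = 0 := hr'
    exact nonZeroDivisors.ne_zero hr (Ideal.Quotient.eq_zero_iff_mem.2 h1)
  let F := FractionRing (B ⧸ v.supp)
  let u : Valuation F NNReal := w.extendToLocalization hws F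
  let α : AbsoluteValue F ℝ :=
    { toFun := fun f => (u f : ℝ)
      map_mul' := fun a b => by simp
      nonneg' := fun a => NNReal.coe_nonneg _
      eq_zero' := fun a => by simp
      add_le' := fun a b => by
        have := u.map_add a b
        have h2 : max (u a) (u b) ≤ u a + u b := max_le (by simp) (by simp)
        exact_mod_cast this.trans h2 }
  let φ : B →+* α.Completion := UniformSpace.Completion.coeRingHom.comp
    ((WithAbs.equiv α).symm.toRingHom.comp
      ((algebraMap (B ⧸ v.supp) F).comp (Ideal.Quotient.mk _)))
  have hφ : ∀ b, ‖φ b‖ = y b := by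
    intro b
    refine (UniformSpace.Completion.norm_coe _).trans ?_
    change ((u (algebraMap (B ⧸ v.supp) F (Ideal.Quotient.mk _ b)) : NNReal) : ℝ) = _
    rw [Valuation.extendToLocalization_apply_map_apply]
    rfl
  refine ⟨α.Completion, inferInstance, inferInstance, ?_, φ, hφ⟩
  apply IsUltrametricDist.isUltrametricDist_of_forall_norm_natCast_le_one
  intro n
  rw [← map_natCast φ, hφ]
  exact h n


/-- The subalgebra of `G`-invariant elements of a `K`-algebra `A`, for a group
`G` acting on `A` by `K`-algebra automorphisms. -/
def invariantSubalgebra (K A G : Type*) [CommSemiring K] [Semiring A] [Algebra K A]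
    [Monoid G] [MulSemiringAction G A]
    (hGK : ∀ (g : G) (k : K), g • (algebraMap K A k) = algebraMap K A k) :
    Subalgebra K A where
  carrier := {a | ∀ g : G, g • a = a}
  mul_mem' := fun {a b} ha hb g => by rw [smul_mul', ha g, hb g]
  add_mem' := fun {a b} ha hb g => by rw [smul_add, ha g, hb g]
  algebraMap_mem' := fun k g => hGK g k

/-- The restriction of a multiplicative seminorm along a ring homomorphism. -/
def MulRingSeminorm.comp {A S : Type*} [Ring A] [Ring S] (x : MulRingSeminorm A)
    (f : S →+* A) : MulRingSeminorm S where
  toFun s := x (f s)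
  map_zero' := by simp
  add_le' r s := by simpa using map_add_le_add x (f r) (f s)
  neg' r := by simp [map_neg f, map_neg_eq_map x]
  map_one' := by simp
  map_mul' r s := by simp

/-- Let `K` be a field complete with respect to a non-Archimedean norm, `A` a
finitely generated commutative `K`-algebra, `G` a finite group acting on `A`
by `K`-algebra automorphisms, and `B` the subalgebra of `G`-invariant
elements.  Then every multiplicative seminorm on `B` extending the norm of `K`
extends to a multiplicative seminorm on `A` extending the norm of `K`. -/
theorem seminorm_on_invariants_extends
    (K : Type*) [NormedField K] [CompleteSpace K]
    (hna : ∀ k k' : K, ‖k + k'‖ ≤ max ‖k‖ ‖k'‖)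
    (A : Type*) [CommRing A] [Algebra K A] (hfg : Algebra.FiniteType K A)
    (G : Type*) [Group G] [Finite G] [MulSemiringAction G A]
    (hGK : ∀ (g : G) (k : K), g • (algebraMap K A k) = algebraMap K A k)
    (y : MulRingSeminorm (invariantSubalgebra K A G hGK))
    (hy : ∀ k : K, y (algebraMap K (invariantSubalgebra K A G hGK) k) = ‖k‖) :
    ∃ x : MulRingSeminorm A, (∀ k : K, x (algebraMap K A k) = ‖k‖) ∧
      ∀ b : invariantSubalgebra K A G hGK, x (b : A) = y b := by

  have hnat : ∀ n : ℕ, y (n : invariantSubalgebra K A G hGK) ≤ 1 := by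
    have : IsUltrametricDist K :=
      IsUltrametricDist.isUltrametricDist_of_forall_norm_add_le_max_norm hna
    intro n
    rw [← map_natCast (algebraMap K (invariantSubalgebra K A G hGK)), hy]
    exact IsUltrametricDist.norm_natCast_le_one K n
  have hinv : Algebra.IsInvariant (invariantSubalgebra K A G hGK) A G :=
    ⟨fun a ha => ⟨⟨a, ha⟩, rfl⟩⟩
  have hint : Algebra.IsIntegral (invariantSubalgebra K A G hGK) A :=
    Algebra.IsInvariant.isIntegral _ A G
  obtain ⟨E, _, _, _, φ, hφ⟩ := exists_complete_field y hnat
  obtain ⟨x, hx⟩ := extend_of_hom (A := A) Subtype.val_injective φ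
  have hxy : ∀ b : invariantSubalgebra K A G hGK, x (b : A) = y b :=
    fun b => (hx b).trans (hφ b)
  exact ⟨x, fun k => (hxy (algebraMap K _ k)).trans (hy k), hxy⟩
end

section
/- Let K be a field complete with respect to a non-Archimedean norm, let A be a commutative K-algebra which is finitely generated as a K-algebra, let G be a finite group acting on A by K-algebra automorphisms, and let B be the subalgebra of G-invariant elements of A. Then restriction of seminorms from A to B induces a bijection between the set of G-orbits of multiplicative seminorms on A extending the norm of K (where G acts by (g • x)(a) = x(g⁻¹ • a)) and the set of multiplicative seminorms on B extending the norm of K. -/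
section
open Polynomial

/-- Completion of an ultrametric field is ultrametric. -/
theorem aux_ultra_completion (F : Type*) [NormedField F] [IsUltrametricDist F] :
    IsUltrametricDist (UniformSpace.Completion F) := by
  refine IsUltrametricDist.isUltrametricDist_of_forall_norm_add_le_max_norm ?_
  intro x y
  induction x, y using UniformSpace.Completion.induction_on₂ with
  | hp => exact isClosed_le (by fun_prop) (by fun_prop)
  | ih a b =>
    rw [← UniformSpace.Completion.coe_add]
    simp only [UniformSpace.Completion.norm_coe]
    exact IsUltrametricDist.norm_add_le_max a b

/-- The trivial seminorm on a field. -/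
theorem aux_trivial (L : Type*) [Field L] :
    ∃ x : MulRingSeminorm L, ∀ a, a ≠ 0 → x a = 1 := by
  classical
  exact ⟨(1 : MulRingNorm L).toMulRingSeminorm, fun a ha => if_neg ha⟩

theorem aux_field.{u} {F : Type u} [NormedField F] [IsUltrametricDist F] :
    ∃ (Ω : Type u) (_ : Field Ω) (_ : IsAlgClosed Ω) (i : F →+* Ω) (x : MulRingSeminorm Ω),
      ∀ f, x (i f) = ‖f‖ := by
  by_cases h : ∃ f : F, 1 < ‖f‖
  · have h1 : ∃ f : UniformSpace.Completion F, 1 < ‖f‖ := by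
      obtain ⟨f, hf⟩ := h
      exact ⟨f, by simpa using hf⟩
    let : NontriviallyNormedField (UniformSpace.Completion F) :=
      { (inferInstance : NormedField (UniformSpace.Completion F)) with non_trivial := h1 }
    have : IsUltrametricDist (UniformSpace.Completion F) := aux_ultra_completion F
    let Ω := AlgebraicClosure (UniformSpace.Completion F)
    refine ⟨Ω, inferInstance, inferInstance,
      (algebraMap (UniformSpace.Completion F) Ω).comp UniformSpace.Completion.coeRingHom,
      ((spectralMulAlgNorm (UniformSpace.Completion F) Ω).toMulRingNorm).toMulRingSeminorm, ?_⟩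
    intro f
    change spectralNorm (UniformSpace.Completion F) Ω _ = _
    rw [RingHom.comp_apply, spectralNorm_extends]
    exact UniformSpace.Completion.norm_coe f
  · push Not at h
    obtain ⟨x, hx⟩ := aux_trivial (AlgebraicClosure F)
    refine ⟨AlgebraicClosure F, inferInstance, inferInstance, algebraMap _ _, x, ?_⟩
    intro f
    by_cases hf : f = 0
    · simp [hf]
    · rw [hx _ (by simpa using hf)]
      refine le_antisymm ?_ (h f)
      have := h f⁻¹
      rw [norm_inv] at this
      exact (inv_le_one₀ (norm_pos_iff.mpr hf)).mp this

/-- A seminorm bounded by one on the naturals is ultrametric. -/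
theorem aux_nonarch {K : Type*} [NormedField K] (hna : ∀ k k' : K, ‖k + k'‖ ≤ max ‖k‖ ‖k'‖)
    {A : Type*} [CommRing A] [Algebra K A] (x : MulRingSeminorm A)
    (hx : ∀ k : K, x (algebraMap K A k) = ‖k‖) : ∀ a b, x (a + b) ≤ max (x a) (x b) := by
  have : IsUltrametricDist K := IsUltrametricDist.isUltrametricDist_of_forall_norm_add_le_max_norm hna
  have hn : ∀ n : ℕ, x (n : A) ≤ 1 := by
    intro n
    rw [← map_natCast (algebraMap K A), hx]
    exact IsUltrametricDist.norm_natCast_le_one K n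
  intro a b
  set M := max (x a) (x b) with hM
  have hM0 : 0 ≤ M := (apply_nonneg x a).trans (le_max_left _ _)
  have key : ∀ m : ℕ, x (a + b) ^ m ≤ (m + 1) * M ^ m := by
    intro m
    rw [← map_pow, add_pow]
    have h1 : ∀ s : Finset ℕ, ∀ f : ℕ → A, x (∑ i ∈ s, f i) ≤ ∑ i ∈ s, x (f i) := by
      intro s f
      induction s using Finset.cons_induction with
      | empty => simp
      | cons i s hi ih =>
        rw [Finset.sum_cons, Finset.sum_cons]
        exact (map_add_le_add x _ _).trans (by gcongr)
    refine (h1 _ _).trans ?_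
    have h2 : ∀ i ∈ Finset.range (m + 1), x (a ^ i * b ^ (m - i) * (m.choose i : A)) ≤ M ^ m := by
      intro i hi
      have him : i + (m - i) = m := by
        have := Finset.mem_range.mp hi
        omega
      rw [map_mul, map_mul, map_pow, map_pow]
      calc x a ^ i * x b ^ (m - i) * x (m.choose i : A) ≤ M ^ i * M ^ (m - i) * 1 := by
            have := apply_nonneg x a
            have := apply_nonneg x b
            gcongr
            · exact le_max_left _ _
            · exact le_max_right _ _
            · exact hn _
        _ = M ^ m := by rw [mul_one, ← pow_add, him]
    refine (Finset.sum_le_sum h2).trans ?_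
    simp
  by_contra! hlt
  obtain ⟨r, hr1, hr2⟩ := exists_between hlt
  have hr0 : 0 < r := hM0.trans_lt hr1
  obtain ⟨m, hm⟩ := Real.exists_natCast_add_one_lt_pow_of_one_lt ((one_lt_div hr0).mpr hr2)
  rw [div_pow, lt_div_iff₀ (by positivity)] at hm
  have h3 : M ^ m ≤ r ^ m := by gcongr
  have h4 := key m
  have h5 : ((m : ℝ) + 1) * M ^ m ≤ (m + 1) * r ^ m := by gcongr
  linarith

theorem aux_ring.{u} {B : Type u} [CommRing B] (y : MulRingSeminorm B)
    (hy : ∀ a b, y (a + b) ≤ max (y a) (y b)) :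
    ∃ (Ω : Type u) (_ : Field Ω) (_ : IsAlgClosed Ω) (i : B →+* Ω) (x : MulRingSeminorm Ω),
      ∀ b, x (i b) = y b := by
  let v : Valuation B NNReal :=
    { toFun := fun b => ⟨y b, apply_nonneg y b⟩
      map_zero' := NNReal.eq (map_zero y)
      map_one' := NNReal.eq (map_one y)
      map_mul' := fun a b => NNReal.eq (map_mul y a b)
      map_add_le_max' := fun a b => by
        have h := hy a b
        rcases le_total (y a) (y b) with h1 | h1
        · rw [max_eq_right h1] at h
          exact le_max_of_le_right h
        · rw [max_eq_left h1] at h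
          exact le_max_of_le_left h }
  let w := v.onQuot (le_refl v.supp)
  have hw0 : ∀ a, w a = 0 → a = 0 := by
    intro a ha
    obtain ⟨a, rfl⟩ := Ideal.Quotient.mk_surjective a
    exact Ideal.Quotient.eq_zero_iff_mem.mpr ha
  have hS : nonZeroDivisors (B ⧸ v.supp) ≤ w.supp.primeCompl := by
    intro a ha h
    exact nonZeroDivisors.ne_zero ha (hw0 a h)
  let F := FractionRing (B ⧸ v.supp)
  let u : Valuation F NNReal := w.extendToLocalization hS F
  let av : AbsoluteValue F ℝ :=
    { toFun := fun f => (u f : ℝ)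
      map_mul' := by simp
      nonneg' := by simp
      eq_zero' := by simp
      add_le' := fun a b => by
        have := u.map_add a b
        rw [← NNReal.coe_add, NNReal.coe_le_coe]
        exact this.trans (max_le (by simp) (by simp)) }
  let : NormedField F := av.toNormedField
  have : IsUltrametricDist F :=
    IsUltrametricDist.isUltrametricDist_of_forall_norm_add_le_max_norm fun a b => by
      change (u (a + b) : ℝ) ≤ max (u a : ℝ) (u b : ℝ)
      exact_mod_cast u.map_add a b
  obtain ⟨Ω, h1, h2, i, x, hx⟩ := aux_field (F := F)
  refine ⟨Ω, h1, h2, i.comp ((algebraMap (B ⧸ v.supp) F).comp (Ideal.Quotient.mk _)), x, fun b => ?_⟩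
  rw [RingHom.comp_apply, hx]
  change (u (algebraMap (B ⧸ v.supp) F (Ideal.Quotient.mk _ b)) : ℝ) = _
  rw [Valuation.extendToLocalization_apply_map_apply]
  rfl

theorem aux_tf {R S : Type*} [CommRing R] [CommRing S] [IsDomain S] [Algebra R S]
    (h : Function.Injective (algebraMap R S)) : Module.IsTorsionFree R S := by
  have : FaithfulSMul R S := (faithfulSMul_iff_algebraMap_injective _ _).mpr h
  have : IsDomain R := h.isDomain _
  infer_instance

theorem aux_lift {B A Ω : Type*} [CommRing B] [CommRing A] [Algebra B A] [Algebra.IsIntegral B A]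
    (hinj : Function.Injective (algebraMap B A)) [Field Ω] [IsAlgClosed Ω] (i : B →+* Ω) :
    ∃ j : A →+* Ω, ∀ b, j (algebraMap B A b) = i b := by
  have : (RingHom.ker i).IsPrime := RingHom.ker_isPrime i
  obtain ⟨Q, -, hQ, hQp⟩ := Ideal.exists_ideal_over_prime_of_isIntegral (RingHom.ker i) (⊥ : Ideal A)
    (by rw [Ideal.comap_bot_of_injective _ hinj]; exact bot_le)
  have : Q.LiesOver (RingHom.ker i) := ⟨hQp.symm⟩
  let : Algebra (B ⧸ RingHom.ker i) Ω := (RingHom.kerLift i).toAlgebra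
  have : FaithfulSMul (B ⧸ RingHom.ker i) Ω :=
    (faithfulSMul_iff_algebraMap_injective _ _).mpr (RingHom.kerLift_injective i)
  have : Module.IsTorsionFree (B ⧸ RingHom.ker i) Ω := inferInstance
  have : Module.IsTorsionFree (B ⧸ RingHom.ker i) (A ⧸ Q) :=
    aux_tf (FaithfulSMul.algebraMap_injective _ _)
  have : Algebra.IsIntegral (B ⧸ RingHom.ker i) (A ⧸ Q) := inferInstance
  let f : (A ⧸ Q) →ₐ[B ⧸ RingHom.ker i] Ω := IsAlgClosed.lift
  refine ⟨f.toRingHom.comp (Ideal.Quotient.mk Q), fun b => ?_⟩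
  have := f.commutes (Ideal.Quotient.mk _ b)
  rw [Ideal.Quotient.algebraMap_mk_of_liesOver] at this
  exact this


theorem aux_add_eq {A : Type*} [CommRing A] (x : MulRingSeminorm A)
    (hx : ∀ a b, x (a + b) ≤ max (x a) (x b)) {a b : A} (h : x b < x a) : x (a + b) = x a := by
  refine le_antisymm ((hx a b).trans (max_le le_rfl h.le)) ?_
  have h1 := hx (a + b) (-b)
  rw [add_neg_cancel_right, map_neg_eq_map] at h1
  rcases le_max_iff.mp h1 with h2 | h2
  · exact h2
  · exact absurd h2 (not_le.mpr h)

theorem aux_sum_lt {A : Type*} [CommRing A] (x : MulRingSeminorm A)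
    (hx : ∀ a b, x (a + b) ≤ max (x a) (x b)) {c : ℝ} (hc : 0 < c) (s : Finset ℕ) (f : ℕ → A)
    (h : ∀ i ∈ s, x (f i) < c) : x (∑ i ∈ s, f i) < c := by
  induction s using Finset.cons_induction with
  | empty => simpa using hc
  | cons i s hi ih =>
    rw [Finset.sum_cons]
    refine (hx _ _).trans_lt (max_lt (h i (by simp)) (ih fun j hj => h j (by simp [hj])))

/-- If no root of a split polynomial has size `r`, the Gauss norm of radius `r` is attained
exactly once. -/
theorem aux_dom {A ι : Type*} [CommRing A] (x : MulRingSeminorm A)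
    (hx : ∀ a b, x (a + b) ≤ max (x a) (x b)) {r : ℝ} (hr : 0 < r) (s : Finset ι) (f : ι → A)
    (hf : ∀ i ∈ s, x (f i) ≠ r) :
    ∃ k, ∀ j, j ≠ k → x ((∏ i ∈ s, (X - C (f i))).coeff j) * r ^ j <
      x ((∏ i ∈ s, (X - C (f i))).coeff k) * r ^ k := by
  induction s using Finset.cons_induction with
  | empty =>
    refine ⟨0, fun j hj => ?_⟩
    simp [coeff_one, hj]
  | cons i s hi ih =>
    obtain ⟨k, hk⟩ := ih fun j hj => hf j (by simp [hj])
    rw [Finset.prod_cons, mul_comm]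
    set P := ∏ i ∈ s, (X - C (f i)) with hP
    have hi' := hf i (by simp)
    set t := f i
    have ht0 : 0 ≤ x t := apply_nonneg x t
    set m := x (P.coeff k) * r ^ k with hm
    have hle : ∀ j, x (P.coeff j) * r ^ j ≤ m := by
      intro j
      by_cases h : j = k
      · rw [h]
      · exact (hk j h).le
    have hm0 : 0 < m := by
      refine lt_of_le_of_lt ?_ (hk (k + 1) (by omega))
      have := apply_nonneg x (P.coeff (k + 1))
      positivity
    have hc0 : (P * (X - C t)).coeff 0 = - (P.coeff 0 * t) := by
      rw [mul_sub, coeff_sub, coeff_mul_C, coeff_mul_X_zero, zero_sub]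
    have hcs : ∀ j, (P * (X - C t)).coeff (j + 1) = P.coeff j + -(P.coeff (j + 1) * t) := by
      intro j
      rw [mul_sub, coeff_sub, coeff_mul_C, coeff_mul_X, sub_eq_add_neg]
    have hA : ∀ j, x (P.coeff j) * r ^ (j + 1) = r * (x (P.coeff j) * r ^ j) := by
      intro j; ring
    have hB : ∀ j, x (-(P.coeff j * t)) * r ^ j = x t * (x (P.coeff j) * r ^ j) := by
      intro j; rw [map_neg_eq_map, map_mul]; ring
    have hS : ∀ j (c : ℝ), r * (x (P.coeff j) * r ^ j) < c →
        x t * (x (P.coeff (j + 1)) * r ^ (j + 1)) < c →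
        x ((P * (X - C t)).coeff (j + 1)) * r ^ (j + 1) < c := by
      intro j c h1 h2
      rw [hcs]
      rw [← hA] at h1
      rw [← hB] at h2
      refine lt_of_le_of_lt (mul_le_mul_of_nonneg_right (hx _ _) (by positivity)) ?_
      rw [max_mul_of_nonneg _ _ (by positivity)]
      exact max_lt h1 h2
    rcases lt_or_gt_of_ne hi' with h | h
    · have hval : x ((P * (X - C t)).coeff (k + 1)) * r ^ (k + 1) = r * m := by
        rw [hcs, aux_add_eq x hx, hA]
        refine lt_of_mul_lt_mul_right (a := r ^ (k + 1)) ?_ (by positivity)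
        rw [hA, hB]
        calc x t * (x (P.coeff (k + 1)) * r ^ (k + 1)) ≤ x t * m := by gcongr; exact hle _
          _ < r * m := by gcongr
      refine ⟨k + 1, fun j hj => ?_⟩
      rw [hval]
      have hb : ∀ j, x t * (x (P.coeff j) * r ^ j) < r * m := fun j =>
        lt_of_le_of_lt (mul_le_mul_of_nonneg_left (hle j) ht0) (by gcongr)
      rcases j with _ | j
      · rw [hc0, hB]; exact hb 0
      · refine hS _ _ ?_ (hb _)
        have := hk j (by omega)
        gcongr
    · have ht : 0 < x t := hr.trans h
      have hb : ∀ j, r * (x (P.coeff j) * r ^ j) < x t * m := fun j =>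
        lt_of_le_of_lt (mul_le_mul_of_nonneg_left (hle j) hr.le) (by gcongr)
      have hval : x ((P * (X - C t)).coeff k) * r ^ k = x t * m := by
        rcases k with _ | k
        · rw [hc0, hB]
        · rw [hcs, add_comm, aux_add_eq x hx, hB]
          refine lt_of_mul_lt_mul_right (a := r ^ (k + 1)) ?_ (by positivity)
          rw [hA, hB]
          exact hb k
      refine ⟨k, fun j hj => ?_⟩
      rw [hval]
      have hd : x t * (x (P.coeff j) * r ^ j) < x t * m := by
        have := hk j hj
        gcongr
      rcases j with _ | j
      · rw [hc0, hB]; exact hd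
      · exact hS _ _ (hb _) hd

theorem aux_exists {A G : Type*} [CommRing A] [Group G] [Finite G] [MulSemiringAction G A]
    (x x' : MulRingSeminorm A)
    (hx : ∀ a b, x (a + b) ≤ max (x a) (x b)) (hx' : ∀ a b, x' (a + b) ≤ max (x' a) (x' b))
    (h : ∀ b : A, (∀ g : G, g • b = b) → x b = x' b) (a : A) (ha : x' a ≠ 0) :
    ∃ g : G, x' a = x (g • a) := by
  cases nonempty_fintype G
  by_contra! hne
  have hr : 0 < x' a := lt_of_le_of_ne (apply_nonneg x' a) ha.symm
  obtain ⟨k, hk⟩ := aux_dom x hx hr Finset.univ (fun g : G => g • a) (fun g _ => (hne g).symm)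
  rw [← MulSemiringAction.charpoly_eq] at hk
  have hc : ∀ j, x ((MulSemiringAction.charpoly G a).coeff j) =
      x' ((MulSemiringAction.charpoly G a).coeff j) := fun j =>
    h _ fun g => MulSemiringAction.smul_coeff_charpoly a j g
  have he := MulSemiringAction.eval_charpoly G a
  set P := MulSemiringAction.charpoly G a
  have hk' : ∀ j, j ≠ k → x' (P.coeff j * a ^ j) < x' (P.coeff k * a ^ k) := by
    intro j hj
    have := hk j hj
    rw [hc, hc] at this
    simpa using this
  have hpos : 0 < x' (P.coeff k * a ^ k) :=
    lt_of_le_of_lt (apply_nonneg x' _) (hk' (k + 1) (by omega))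
  rw [eval_eq_sum_range' (n := max (P.natDegree + 1) (k + 1)) (by omega),
    ← Finset.add_sum_erase _ _ (Finset.mem_range.mpr (by omega : k < max (P.natDegree + 1) (k + 1)))] at he
  have h1 := aux_add_eq x' hx' (a := P.coeff k * a ^ k)
    (aux_sum_lt x' hx' hpos ((Finset.range (max (P.natDegree + 1) (k + 1))).erase k)
      (fun j => P.coeff j * a ^ j) fun j hj => hk' j (Finset.ne_of_mem_erase hj))
  rw [he, map_zero] at h1
  exact hpos.ne h1

theorem aux_pow {b c β γ : ℝ} (hb : 0 < b) (hc : 0 < c) (hβ : 0 ≤ β) (hne : b ≠ β) :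
    {N : ℕ | b ^ N * c = β ^ N * γ}.Finite := by
  apply Set.Subsingleton.finite
  have : ∀ N M : ℕ, b ^ N * c = β ^ N * γ → b ^ M * c = β ^ M * γ → ¬ N < M := by
    intro N M hN hM hlt
    obtain ⟨d, rfl⟩ := Nat.exists_eq_add_of_lt hlt
    rw [add_assoc, pow_add b, pow_add β] at hM
    have h1 : (b ^ N * c) * b ^ (d + 1) = (b ^ N * c) * β ^ (d + 1) := by
      calc (b ^ N * c) * b ^ (d + 1) = β ^ N * β ^ (d + 1) * γ := by rw [← hM]; ring
        _ = _ := by rw [hN]; ring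
    have h2 := mul_left_cancel₀ (by positivity) h1
    exact hne ((pow_left_inj₀ hb.le hβ (by omega)).mp h2)
  intro N hN M hM
  have h1 := this N M hN hM
  have h2 := this M N hM hN
  omega

theorem aux_combine {A G : Type*} [CommRing A] [Group G] [MulSemiringAction G A]
    (x x' : MulRingSeminorm A)
    (h : ∀ g : G, ∃ a, x' a ≠ 0 ∧ x' a ≠ x (g • a)) (S : Finset G) :
    ∃ a, x' a ≠ 0 ∧ ∀ g ∈ S, x' a ≠ x (g • a) := by
  induction S using Finset.cons_induction with
  | empty => exact ⟨1, by simp, by simp⟩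
  | cons g S hg ih =>
    obtain ⟨b, hb0, hb⟩ := ih
    obtain ⟨c, hc0, hc⟩ := h g
    have hb1 : 0 < x' b := lt_of_le_of_ne (apply_nonneg x' b) hb0.symm
    have hc1 : 0 < x' c := lt_of_le_of_ne (apply_nonneg x' c) hc0.symm
    have hfin : ∀ k ∈ Finset.cons g S hg,
        {N : ℕ | x' b ^ N * x' c = x (k • b) ^ N * x (k • c)}.Finite := by
      intro k hk
      by_cases hkb : x' b = x (k • b)
      · have hkg : k = g := by
          rcases Finset.mem_cons.mp hk with h1 | h1
          · exact h1
          · exact absurd hkb (hb k h1)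
        subst hkg
        convert Set.finite_empty
        ext N
        simp only [Set.mem_ofPred_eq, Set.mem_empty_iff_false, iff_false]
        rw [← hkb]
        intro h1
        exact hc (mul_left_cancel₀ (pow_ne_zero _ hb0) h1)
      · exact aux_pow hb1 hc1 (apply_nonneg x _) hkb
    obtain ⟨N, hN⟩ := (Set.Finite.biUnion (Finset.finite_toSet _) hfin).exists_notMem
    refine ⟨b ^ N * c, ?_, ?_⟩
    · rw [map_mul, map_pow]; positivity
    · intro k hk hE
      apply hN
      refine Set.mem_biUnion hk ?_
      rw [smul_mul', smul_pow'] at hE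
      simpa using hE

/-- The kernel of a multiplicative seminorm. -/
def auxKer {A : Type*} [CommRing A] (x : MulRingSeminorm A) : Ideal A where
  carrier := {a | x a = 0}
  zero_mem' := map_zero x
  add_mem' := fun {a b} ha hb => by
    have ha' : x a = 0 := ha
    have hb' : x b = 0 := hb
    refine le_antisymm ?_ (apply_nonneg x _)
    have := map_add_le_add x a b
    rwa [ha', hb', add_zero] at this
  smul_mem' := fun c a ha => by
    have ha' : x a = 0 := ha
    change x (c * a) = 0
    rw [map_mul, ha', mul_zero]

theorem auxKer_prime {A : Type*} [CommRing A] (x : MulRingSeminorm A) : (auxKer x).IsPrime := by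
  refine ⟨fun h => ?_, fun {a b} h => ?_⟩
  · have h1 : (1 : A) ∈ auxKer x := by rw [h]; trivial
    have h2 : x 1 = 0 := h1
    simp at h2
  · have h2 : x (a * b) = 0 := h
    rw [map_mul] at h2
    exact mul_eq_zero.mp h2

end


/-- Let `K` be a field complete with respect to a non-Archimedean norm, `A` a
finitely generated commutative `K`-algebra, `G` a finite group acting on `A`
by `K`-algebra automorphisms, and `B` the subalgebra of `G`-invariant
elements.  Then restriction of seminorms from `A` to `B` induces a bijection
between `G`-orbits of multiplicative seminorms on `A` extending the norm of
`K` (where `(g • x)(a) = x(g⁻¹ • a)`) and multiplicative seminorms on `B`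
extending the norm of `K`: the restriction map is surjective, and two
seminorms on `A` have the same restriction iff they lie in the same
`G`-orbit. -/
theorem restriction_bijection_orbits_seminorms
    (K : Type*) [NormedField K] [CompleteSpace K]
    (hna : ∀ k k' : K, ‖k + k'‖ ≤ max ‖k‖ ‖k'‖)
    (A : Type*) [CommRing A] [Algebra K A] (hfg : Algebra.FiniteType K A)
    (G : Type*) [Group G] [Finite G] [MulSemiringAction G A]
    (hGK : ∀ (g : G) (k : K), g • (algebraMap K A k) = algebraMap K A k) :
    (∀ y : MulRingSeminorm (invariantSubalgebra K A G hGK),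
      (∀ k : K, y (algebraMap K (invariantSubalgebra K A G hGK) k) = ‖k‖) →
      ∃ x : MulRingSeminorm A, (∀ k : K, x (algebraMap K A k) = ‖k‖) ∧
        x.comp (invariantSubalgebra K A G hGK).toSubring.subtype = y) ∧
    (∀ x x' : MulRingSeminorm A,
      (∀ k : K, x (algebraMap K A k) = ‖k‖) →
      (∀ k : K, x' (algebraMap K A k) = ‖k‖) →
      (x.comp (invariantSubalgebra K A G hGK).toSubring.subtype =
          x'.comp (invariantSubalgebra K A G hGK).toSubring.subtype ↔
        ∃ g : G, ∀ a : A, x' a = x (g⁻¹ • a))) := by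
  have hInv : Algebra.IsInvariant (invariantSubalgebra K A G hGK) A G :=
    ⟨fun b hb => ⟨⟨b, hb⟩, rfl⟩⟩
  have hInt : Algebra.IsIntegral (invariantSubalgebra K A G hGK) A :=
    Algebra.IsInvariant.isIntegral _ A G
  refine ⟨fun y hy => ?_, fun x x' hx hx' => ⟨fun h => ?_, fun h => ?_⟩⟩
  · obtain ⟨Ω, _, _, i, z, hz⟩ := aux_ring y (aux_nonarch hna y hy)
    obtain ⟨j, hj⟩ := aux_lift (B := invariantSubalgebra K A G hGK) (A := A)
      Subtype.val_injective i
    have hres : ∀ b : invariantSubalgebra K A G hGK, z (j (b : A)) = y b := by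
      intro b
      rw [← hz, ← hj]
      rfl
    refine ⟨z.comp j, fun k => ?_, ?_⟩
    · rw [← hy k]
      exact hres (algebraMap K _ k)
    · exact DFunLike.ext _ _ hres
  · have hna1 := aux_nonarch hna x hx
    have hna2 := aux_nonarch hna x' hx'
    have hB : ∀ b : A, (∀ g : G, g • b = b) → x b = x' b := fun b hb =>
      DFunLike.congr_fun h (⟨b, hb⟩ : (invariantSubalgebra K A G hGK).toSubring)
    suffices hs : ∃ g : G, ∀ a, x' a = x (g • a) by
      obtain ⟨g, hg⟩ := hs
      exact ⟨g⁻¹, by simpa using hg⟩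
    by_contra! hcon
    have hcon' : ∀ g : G, ∃ a, x' a ≠ 0 ∧ x' a ≠ x (g • a) := by
      intro g
      by_contra! hg
      obtain ⟨a, ha⟩ := hcon g
      have ha0 : x' a = 0 := by
        by_contra h0
        exact ha (hg a h0)
      let w : MulRingSeminorm A := x.comp (MulSemiringAction.toRingHom G A g)
      have hw : ∀ b, w b = x (g • b) := fun b => rfl
      have hp := auxKer_prime w
      have hlt : auxKer w < auxKer x' := by
        refine lt_of_le_of_ne ?_ ?_
        · intro b hb
          have hb' : x (g • b) = 0 := hb
          by_contra h0
          have h0' : x' b ≠ 0 := h0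
          exact h0' ((hg b h0').trans hb')
        · intro heq
          have h1 : a ∈ auxKer x' := ha0
          rw [← heq] at h1
          have h2 : x (g • a) = 0 := h1
          exact ha (ha0.trans h2.symm)
      have hlt2 := Ideal.IsIntegral.comap_lt_comap (R := invariantSubalgebra K A G hGK) hlt
      refine hlt2.not_ge ?_
      intro b hb
      have hb1 : x' (b : A) = 0 := hb
      change x (g • (b : A)) = 0
      rw [b.2 g, hB _ b.2, hb1]
    cases nonempty_fintype G
    obtain ⟨a, ha0, ha⟩ := aux_combine x x' hcon' Finset.univ
    obtain ⟨g, hg⟩ := aux_exists x x' hna1 hna2 hB a ha0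
    exact ha g (Finset.mem_univ g) hg
  · obtain ⟨g, hg⟩ := h
    refine DFunLike.ext _ _ fun b => ?_
    change x (b : A) = x' (b : A)
    rw [hg, b.2 g⁻¹]
end
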